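/- Consider the tensorized Hermite basis (h_n) of L²(ℝ³). For every δ > 0 and every s ∈ [0,1], there exists a constant C > 0 such that for all n, m, k: (i) ‖h_n h_m‖_{ℋ^s(ℝ³)} ≤ C max(λ_n, λ_m)^{s−1/2+δ}, and (ii) ‖h_n h_m h_k‖_{ℋ^s(ℝ³)} ≤ C max(λ_n, λ_m, λ_k)^{s−1/2+δ}. -/

import Mathlib

open MeasureTheory Complex Filter Set
open scoped ENNReal

noncomputable section

abbrev Rd (d : ℕ) := EuclideanSpace ℝ (Fin d)

/-- The one-dimensional Hermite function
`e_k(x) = (-1)^k (k!)^{-1/2} 2^{-k/2} π^{-1/4} e^{x²/2} (d^k/dx^k)(e^{-x²})`. -/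
def hermiteFun (k : ℕ) (x : ℝ) : ℝ :=
  (-1 : ℝ) ^ k *
    ((Nat.factorial k : ℝ) ^ (-(1/2 : ℝ)) * (2 : ℝ) ^ (-(k : ℝ)/2) *
      Real.pi ^ (-(1/4 : ℝ))) *
    Real.exp (x ^ 2 / 2) * iteratedDeriv k (fun y => Real.exp (-y ^ 2)) x

/-- The tensorized Hermite function on `ℝ³`. -/
def hermite3 (n : Fin 3 → ℕ) (x : Rd 3) : ℝ :=
  ∏ i, hermiteFun (n i) (x i)

/-- `λ_n = √(2(n₁+n₂+n₃)+3)`. -/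
def lam3 (n : Fin 3 → ℕ) : ℝ :=
  Real.sqrt (2 * (∑ i, (n i : ℝ)) + 3)

/-- The tensorized Hermite coefficient on `ℝ³`. -/
def coef3 (u : Rd 3 → ℂ) (n : Fin 3 → ℕ) : ℂ :=
  ∫ x : Rd 3, (hermite3 n x : ℂ) * u x

/-- The harmonic Sobolev norm on `ℝ³`: `‖u‖²_{ℋ^s} = Σ_n λ_n^{2s} |⟨h_n,u⟩|²`. -/
def hs3Norm (s : ℝ) (u : Rd 3 → ℂ) : ℝ≥0∞ :=
  (∑' n : Fin 3 → ℕ,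
    ENNReal.ofReal (lam3 n ^ (2 * s) * ‖coef3 u n‖ ^ 2)) ^ (1/2 : ℝ)

/-!
On the diagonal, Mehler's generating function factorizes as
`∑ e_N(x)² rᴺ = π^{-1/4} (1 - r)^{-1/2} ∑ √a_j e_{2j}(√2 x) rʲ`, where `∑ a_j rʲ = (1 - r)^{-1/2}`,
because both sides solve the same differential equation in `r`. So `e_N²` is an explicit
combination of the orthogonal functions `e_{2j}(√2 x)`, and `∫ e_N² e_M²` is a convolution of the
`a_j ≲ j^{-1/2}`, of size `N^{-1/2} log N` when `M ≤ N`. This is the gain of the theorem on the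
line, without derivatives.

Agmon's inequality `u² ≤ t ∫ u² + t⁻¹ ∫ u'²` for `u = e_k²` turns it into a sup bound on `e_k` that
loses an arbitrarily small power, which absorbs all but two factors of a product. The ladder
operators express derivatives of a product through products with one index shifted, so the `ℋ¹`
norm costs one factor `N^{1/2}`. In dimension three, the coordinate that carries the largest index
supplies the decay, and `λ^{2s} ≤ L^{2s} (1 + λ² / L²)` interpolates between `ℋ⁰` and `ℋ¹`.
-/

open Asymptotics
open scoped PowerSeries

/-! ### Ladder operators -/

lemma hasDerivAt_iteratedDeriv_gaussian (k : ℕ) (x : ℝ) :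
    HasDerivAt (iteratedDeriv k fun y : ℝ => Real.exp (-y ^ 2))
      (iteratedDeriv (k + 1) (fun y : ℝ => Real.exp (-y ^ 2)) x) x := by
  have hc : ContDiff ℝ (k + 1 : ℕ) fun y : ℝ => Real.exp (-y ^ 2) := by fun_prop
  rw [iteratedDeriv_succ]
  exact (hc.differentiable_iteratedDeriv k (by exact_mod_cast k.lt_succ_self) x).hasDerivAt

lemma iteratedDeriv_gaussian_succ (k : ℕ) (x : ℝ) :
    iteratedDeriv (k + 1) (fun y : ℝ => Real.exp (-y ^ 2)) x =
      -2 * (x * iteratedDeriv k (fun y : ℝ => Real.exp (-y ^ 2)) x +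
        k * iteratedDeriv (k - 1) (fun y : ℝ => Real.exp (-y ^ 2)) x) := by
  induction k generalizing x with
  | zero =>
    have h := ((hasDerivAt_pow 2 x).fun_neg.exp).deriv
    rw [iteratedDeriv_one, h, iteratedDeriv_zero]
    push_cast
    ring
  | succ k ih =>
    have hlower : HasDerivAt
        (fun y => (k : ℝ) * iteratedDeriv (k - 1) (fun y : ℝ => Real.exp (-y ^ 2)) y)
        (k * iteratedDeriv k (fun y : ℝ => Real.exp (-y ^ 2)) x) x := by
      rcases k with _ | k
      · simpa using hasDerivAt_const x (0 : ℝ)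
      · exact (hasDerivAt_iteratedDeriv_gaussian k x).const_mul _
    have hsum := (((hasDerivAt_id' x).fun_mul (hasDerivAt_iteratedDeriv_gaussian k x)).fun_add
      hlower).const_mul (-2)
    rw [← funext ih] at hsum
    rw [(hasDerivAt_iteratedDeriv_gaussian (k + 1) x).unique hsum, Nat.add_sub_cancel]
    push_cast
    ring

/-- The normalizing constant `(-1)^k (k!)^{-1/2} 2^{-k/2} π^{-1/4}` of the Hermite function `e_k`,
sign included. -/
def hermiteConst (k : ℕ) : ℝ :=
  (-1 : ℝ) ^ k *
    ((Nat.factorial k : ℝ) ^ (-(1/2 : ℝ)) * (2 : ℝ) ^ (-(k : ℝ)/2) *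
      Real.pi ^ (-(1/4 : ℝ)))

lemma hermiteFun_eq (k : ℕ) (x : ℝ) :
    hermiteFun k x = hermiteConst k *
      Real.exp (x ^ 2 / 2) * iteratedDeriv k (fun y => Real.exp (-y ^ 2)) x := rfl

lemma sqrt_mul_hermiteConst_succ (k : ℕ) :
    √(2 * (k + 1)) * hermiteConst (k + 1) = -hermiteConst k := by
  have hfactorial : (((k + 1).factorial : ℕ) : ℝ) ^ (-(1/2 : ℝ)) =
      (√(k + 1))⁻¹ * (k.factorial : ℝ) ^ (-(1/2 : ℝ)) := by
    rw [Nat.factorial_succ, Nat.cast_mul, Real.mul_rpow (by positivity) (by positivity),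
      Real.rpow_neg (by positivity), ← Real.sqrt_eq_rpow, Nat.cast_succ]
  have htwo : (2 : ℝ) ^ (-((k + 1 : ℕ) : ℝ) / 2) = (√2)⁻¹ * (2 : ℝ) ^ (-(k : ℝ) / 2) := by
    rw [show -((k + 1 : ℕ) : ℝ) / 2 = -(1/2) + -(k : ℝ) / 2 by push_cast; ring,
      Real.rpow_add (by norm_num), Real.rpow_neg (by norm_num), ← Real.sqrt_eq_rpow]
  have hsqrt : √((k : ℝ) + 1) ≠ 0 := by positivity
  rw [hermiteConst, hermiteConst, hfactorial, htwo, Real.sqrt_mul (by norm_num), pow_succ]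
  field_simp

lemma hermiteFun_zero (x : ℝ) :
    hermiteFun 0 x = Real.pi ^ (-(1/4 : ℝ)) * Real.exp (-(1/2) * x ^ 2) := by
  have hexp : Real.exp (x ^ 2 / 2) * Real.exp (-x ^ 2) = Real.exp (-(1/2) * x ^ 2) := by
    rw [← Real.exp_add]
    ring_nf
  rw [hermiteFun_eq, iteratedDeriv_zero, mul_assoc, hexp]
  simp [hermiteConst]

lemma sqrt_mul_hermiteFun_succ (k : ℕ) (x : ℝ) :
    √(2 * (k + 1)) * hermiteFun (k + 1) x =
      2 * x * hermiteFun k x - √(2 * k) * hermiteFun (k - 1) x := by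
  have hconst : 2 * k * hermiteConst k = -(√(2 * k) * hermiteConst (k - 1)) := by
    rcases k with _ | k
    · simp
    · have hsq : √(2 * ((k : ℝ) + 1)) ^ 2 = 2 * (k + 1) := Real.sq_sqrt (by positivity)
      rw [Nat.add_sub_cancel, ← mul_neg, ← sqrt_mul_hermiteConst_succ]
      push_cast
      linear_combination -hermiteConst (k + 1) * hsq
  rw [hermiteFun_eq, hermiteFun_eq, hermiteFun_eq, iteratedDeriv_gaussian_succ]
  set g := fun j => iteratedDeriv j fun y : ℝ => Real.exp (-y ^ 2)
  linear_combination Real.exp (x ^ 2 / 2) * g (k - 1) x * hconst +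
    -2 * Real.exp (x ^ 2 / 2) * (x * g k x + k * g (k - 1) x) * sqrt_mul_hermiteConst_succ k

lemma mul_hermiteFun (k : ℕ) (x : ℝ) :
    x * hermiteFun k x =
      (√(2 * k) * hermiteFun (k - 1) x + √(2 * (k + 1)) * hermiteFun (k + 1) x) / 2 := by
  rw [sqrt_mul_hermiteFun_succ]
  ring

lemma hasDerivAt_hermiteFun (k : ℕ) (x : ℝ) :
    HasDerivAt (hermiteFun k)
      ((√(2 * k) * hermiteFun (k - 1) x - √(2 * (k + 1)) * hermiteFun (k + 1) x) / 2) x := by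
  have hexp : HasDerivAt (fun x : ℝ => Real.exp (x ^ 2 / 2)) (Real.exp (x ^ 2 / 2) * x) x :=
    (((hasDerivAt_pow 2 x).div_const 2).exp).congr_deriv (by push_cast; ring)
  have h := (hexp.const_mul (hermiteConst k)).mul (hasDerivAt_iteratedDeriv_gaussian k x)
  refine h.congr_deriv ?_
  have hcreation : √(2 * (k + 1)) * hermiteFun (k + 1) x = -hermiteConst k *
      Real.exp (x ^ 2 / 2) * iteratedDeriv (k + 1) (fun y => Real.exp (-y ^ 2)) x := by
    rw [hermiteFun_eq, ← sqrt_mul_hermiteConst_succ]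
    ring
  have hx := mul_hermiteFun k x
  rw [hermiteFun_eq k] at hx
  linear_combination hx + hcreation

/-! ### Functions of Gaussian decay -/

/-- Continuous functions dominated by some Gaussian `e^{-b x²}`, `b > 0`: an algebra, stable under
multiplication by `x`, that contains every Hermite function and on which all the integrals below
converge. -/
def GaussianDecay (u : ℝ → ℝ) : Prop :=
  Continuous u ∧ ∃ b > 0, u =O[⊤] fun x => Real.exp (-b * x ^ 2)

namespace GaussianDecay

variable {u v : ℝ → ℝ}

lemma integrable (hu : GaussianDecay u) : Integrable u := by
  obtain ⟨hc, b, hb, h⟩ := hu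
  obtain ⟨C, hC⟩ := isBigO_top.1 h
  refine ((integrable_exp_neg_mul_sq hb).const_mul C).mono' hc.aestronglyMeasurable
    (Eventually.of_forall fun x => ?_)
  simpa using hC x

lemma const_mul (hu : GaussianDecay u) (c : ℝ) : GaussianDecay fun x => c * u x := by
  obtain ⟨hc, b, hb, h⟩ := hu
  exact ⟨hc.const_mul c, b, hb, h.const_mul_left c⟩

lemma add (hu : GaussianDecay u) (hv : GaussianDecay v) : GaussianDecay fun x => u x + v x := by
  obtain ⟨hc, b, hb, h⟩ := hu
  obtain ⟨hc', b', hb', h'⟩ := hv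
  have hmono {c : ℝ} (hmin : min b b' ≤ c) : (fun x : ℝ => Real.exp (-c * x ^ 2)) =O[⊤]
      fun x => Real.exp (-(min b b') * x ^ 2) := by
    refine IsBigO.of_bound 1 (Eventually.of_forall fun x => ?_)
    rw [one_mul, Real.norm_of_nonneg (Real.exp_nonneg _), Real.norm_of_nonneg (Real.exp_nonneg _)]
    gcongr
  exact ⟨hc.add hc', min b b', lt_min hb hb', (h.trans (hmono (min_le_left _ _))).add
    (h'.trans (hmono (min_le_right _ _)))⟩

lemma sub (hu : GaussianDecay u) (hv : GaussianDecay v) : GaussianDecay fun x => u x - v x := by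
  simpa [sub_eq_add_neg] using hu.add (hv.const_mul (-1))

lemma mul (hu : GaussianDecay u) (hv : GaussianDecay v) : GaussianDecay fun x => u x * v x := by
  obtain ⟨hc, b, hb, h⟩ := hu
  obtain ⟨hc', b', hb', h'⟩ := hv
  refine ⟨hc.mul hc', b + b', add_pos hb hb', (h.mul h').congr_right fun x => ?_⟩
  rw [← Real.exp_add]
  ring_nf

lemma sq (hu : GaussianDecay u) : GaussianDecay fun x => u x ^ 2 := by
  simpa only [pow_two] using hu.mul hu

lemma id_mul (hu : GaussianDecay u) : GaussianDecay fun x => x * u x := by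
  obtain ⟨hc, b, hb, h⟩ := hu
  have hid : (fun x : ℝ => x) =O[⊤] fun x => Real.exp (b / 2 * x ^ 2) := by
    refine IsBigO.of_bound (1 + 2 / b) (Eventually.of_forall fun x => ?_)
    rw [Real.norm_of_nonneg (Real.exp_nonneg _)]
    calc |x| ≤ 1 + x ^ 2 := by nlinarith [sq_abs x, sq_nonneg (|x| - 1), abs_nonneg x]
      _ ≤ 1 + x ^ 2 + (2 / b + b / 2 * x ^ 2) := by
        have : 0 < 2 / b + b / 2 * x ^ 2 := by positivity
        linarith
      _ = (1 + 2 / b) * (b / 2 * x ^ 2 + 1) := by field_simp; ring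
      _ ≤ (1 + 2 / b) * Real.exp (b / 2 * x ^ 2) := by
        gcongr
        exact Real.add_one_le_exp _
  refine ⟨continuous_id.mul hc, b / 2, by positivity, (hid.mul h).congr_right fun x => ?_⟩
  rw [← Real.exp_add]
  ring_nf

lemma comp_const_mul (hu : GaussianDecay u) {c : ℝ} (hc : c ≠ 0) :
    GaussianDecay fun x => u (c * x) := by
  obtain ⟨hcont, b, hb, h⟩ := hu
  refine ⟨hcont.comp (continuous_const_mul c), b * c ^ 2, by positivity,
    (h.comp_tendsto tendsto_top).congr_right fun x => ?_⟩
  simp only [Function.comp_apply]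
  ring_nf

lemma finset_sum {ι : Type*} (s : Finset ι) {f : ι → ℝ → ℝ}
    (hf : ∀ i ∈ s, GaussianDecay (f i)) : GaussianDecay fun x => ∑ i ∈ s, f i x := by
  induction s using Finset.cons_induction with
  | empty => exact ⟨by simpa using continuous_const, 1, one_pos, IsBigO.of_bound 0 (by simp)⟩
  | cons i s hi ih =>
    simp only [Finset.sum_cons]
    exact (hf i (by simp)).add (ih fun j hj => hf j (by simp [hj]))

lemma finset_prod {ι : Type*} {s : Finset ι} (hs : s.Nonempty) {f : ι → ℝ → ℝ}
    (hf : ∀ i ∈ s, GaussianDecay (f i)) : GaussianDecay fun x => ∏ i ∈ s, f i x := by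
  induction hs using Finset.Nonempty.cons_induction with
  | singleton i => simpa using hf i
  | cons i s hi _ ih =>
    simp only [Finset.prod_cons]
    exact (hf i (by simp)).mul (ih fun j hj => hf j (by simp [hj]))

lemma memLp_two (hu : GaussianDecay u) : MemLp u 2 :=
  (memLp_two_iff_integrable_sq hu.1.aestronglyMeasurable).2 hu.sq.integrable

lemma integral_deriv_eq_zero (hu : GaussianDecay u) (hv : GaussianDecay v)
    (h : ∀ x, HasDerivAt u (v x) x) : ∫ x, v x = 0 :=
  integral_eq_zero_of_hasDerivAt_of_integrable h hv.integrable hu.integrable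

end GaussianDecay

lemma gaussianDecay_hermiteFun (k : ℕ) : GaussianDecay (hermiteFun k) := by
  induction k using Nat.strong_induction_on with
  | _ k ih =>
    rcases k with _ | k
    · have hgauss : GaussianDecay fun x => Real.exp (-(1/2) * x ^ 2) :=
        ⟨by fun_prop, 1/2, by norm_num, isBigO_refl _ _⟩
      rw [funext hermiteFun_zero]
      exact hgauss.const_mul _
    · have hrec : hermiteFun (k + 1) = fun x => (√(2 * ((k : ℝ) + 1)))⁻¹ *
          (2 * (x * hermiteFun k x) - √(2 * k) * hermiteFun (k - 1) x) := by
        funext x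
        rw [eq_inv_mul_iff_mul_eq₀ (by positivity), sqrt_mul_hermiteFun_succ]
        ring
      rw [hrec]
      exact (((ih k (by lia)).id_mul.const_mul 2).sub
        ((ih (k - 1) (by lia)).const_mul _)).const_mul _

lemma gaussianDecay_deriv_hermiteFun (k : ℕ) : GaussianDecay (deriv (hermiteFun k)) := by
  have hdecay := gaussianDecay_hermiteFun
  have hderiv : deriv (hermiteFun k) = fun x => 2⁻¹ *
      (√(2 * k) * hermiteFun (k - 1) x - √(2 * (k + 1)) * hermiteFun (k + 1) x) := by
    funext x
    rw [(hasDerivAt_hermiteFun k x).deriv, div_eq_inv_mul]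
  rw [hderiv]
  exact (((hdecay _).const_mul _).sub ((hdecay _).const_mul _)).const_mul 2⁻¹

/-! ### Hermite coefficients and Bessel inequalities -/

/-- The Hermite coefficient `⟨e_k, u⟩` of a function on the line. -/
def hermiteCoef (u : ℝ → ℝ) (k : ℕ) : ℝ := ∫ x, hermiteFun k x * u x

lemma sqrt_mul_hermiteCoef_succ {u v : ℝ → ℝ} (hu : GaussianDecay u) (hv : GaussianDecay v)
    (h : ∀ x, HasDerivAt u (v x) x) (k : ℕ) :
    √(2 * (k + 1)) * hermiteCoef u (k + 1) = hermiteCoef (fun x => v x + x * u x) k := by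
  have hk := gaussianDecay_hermiteFun k
  have hleft := ((gaussianDecay_hermiteFun (k + 1)).mul hu).const_mul √(2 * (k + 1))
  have hright := hk.mul (hv.add hu.id_mul)
  have hparts := (hk.mul hu).integral_deriv_eq_zero (hright.sub hleft) fun x =>
    ((hasDerivAt_hermiteFun k x).fun_mul (h x)).congr_deriv
      (by linear_combination -u x * mul_hermiteFun k x)
  rw [integral_sub hright.integrable hleft.integrable, integral_const_mul] at hparts
  exact (sub_eq_zero.1 hparts).symm

lemma hermiteCoef_hermiteFun_comm (n m : ℕ) :
    hermiteCoef (hermiteFun m) n = hermiteCoef (hermiteFun n) m := by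
  simp only [hermiteCoef, mul_comm]

lemma sqrt_mul_hermiteCoef_hermiteFun_succ (n m : ℕ) :
    √(2 * (n + 1)) * hermiteCoef (hermiteFun m) (n + 1) =
      √(2 * m) * hermiteCoef (hermiteFun (m - 1)) n := by
  rw [sqrt_mul_hermiteCoef_succ (gaussianDecay_hermiteFun m) (gaussianDecay_deriv_hermiteFun m)
    fun x => (hasDerivAt_hermiteFun m x).differentiableAt.hasDerivAt]
  simp only [hermiteCoef]
  rw [← integral_const_mul]
  congr 1 with x
  rw [(hasDerivAt_hermiteFun m x).deriv, mul_hermiteFun]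
  ring

lemma hermiteCoef_hermiteFun_zero_zero : hermiteCoef (hermiteFun 0) 0 = 1 := by
  have hsq (x : ℝ) : hermiteFun 0 x * hermiteFun 0 x =
      Real.pi ^ (-(1/2 : ℝ)) * Real.exp (-1 * x ^ 2) := by
    rw [hermiteFun_zero, mul_mul_mul_comm, ← Real.exp_add, ← Real.rpow_add Real.pi_pos]
    ring_nf
  simp_rw [hermiteCoef, hsq]
  rw [integral_const_mul, integral_gaussian, div_one, Real.sqrt_eq_rpow,
    ← Real.rpow_add Real.pi_pos]
  norm_num

lemma hermiteCoef_hermiteFun (n m : ℕ) :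
    hermiteCoef (hermiteFun m) n = if n = m then 1 else 0 := by
  have hzero (n : ℕ) : hermiteCoef (hermiteFun 0) (n + 1) = 0 := by
    have h := sqrt_mul_hermiteCoef_hermiteFun_succ n 0
    simp only [Nat.cast_zero, mul_zero, Real.sqrt_zero, zero_mul] at h
    exact (mul_eq_zero.mp h).resolve_left (by positivity)
  induction n generalizing m with
  | zero =>
    rcases m with _ | m
    · simpa using hermiteCoef_hermiteFun_zero_zero
    · simpa [hermiteCoef_hermiteFun_comm 0] using hzero m
  | succ n ih =>
    rcases m with _ | m
    · simpa using hzero n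
    · have h := sqrt_mul_hermiteCoef_hermiteFun_succ n (m + 1)
      rw [Nat.add_sub_cancel, ih] at h
      have hsqrt : √(2 * ((n : ℝ) + 1)) ≠ 0 := by positivity
      rw [Nat.cast_succ] at h
      rcases eq_or_ne n m with rfl | hnm
      · simpa using mul_left_cancel₀ hsqrt (h.trans (by simp))
      · simpa [hnm] using mul_left_cancel₀ hsqrt (h.trans (by simp [hnm]))

lemma GaussianDecay.inner_toLp {u v : ℝ → ℝ} (hu : GaussianDecay u) (hv : GaussianDecay v) :
    inner ℝ (hu.memLp_two.toLp u) (hv.memLp_two.toLp v) = ∫ x, u x * v x := by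
  rw [L2.inner_def]
  refine integral_congr_ae ?_
  filter_upwards [hu.memLp_two.coeFn_toLp, hv.memLp_two.coeFn_toLp] with x hux hvx
  rw [hux, hvx, RCLike.inner_apply, conj_trivial, mul_comm]

lemma orthonormal_hermiteFun :
    Orthonormal ℝ fun k => (gaussianDecay_hermiteFun k).memLp_two.toLp (hermiteFun k) := by
  rw [orthonormal_iff_ite]
  intro n m
  rw [(gaussianDecay_hermiteFun n).inner_toLp (gaussianDecay_hermiteFun m)]
  exact hermiteCoef_hermiteFun n m

lemma sum_hermiteCoef_sq_le {u : ℝ → ℝ} (hu : GaussianDecay u) (s : Finset ℕ) :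
    ∑ k ∈ s, hermiteCoef u k ^ 2 ≤ ∫ x, u x ^ 2 := by
  have h := orthonormal_hermiteFun.sum_inner_products_le (hu.memLp_two.toLp u) (s := s)
  simp only [(gaussianDecay_hermiteFun _).inner_toLp hu, Real.norm_eq_abs, sq_abs,
    ← real_inner_self_eq_norm_sq, hu.inner_toLp hu, ← pow_two] at h
  exact h

lemma sum_mul_hermiteCoef_sq_le {u v : ℝ → ℝ} (hu : GaussianDecay u)
    (hv : GaussianDecay v) (h : ∀ x, HasDerivAt u (v x) x) (s : Finset ℕ) :
    ∑ k ∈ s, (2 * k + 1) * hermiteCoef u k ^ 2 ≤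
      (∫ x, u x ^ 2) + ∫ x, (v x + x * u x) ^ 2 := by
  have hweight (k : ℕ) : 2 * ((k + 1 : ℕ) : ℝ) * hermiteCoef u (k + 1) ^ 2 =
      hermiteCoef (fun x => v x + x * u x) k ^ 2 := by
    rw [← sqrt_mul_hermiteCoef_succ hu hv h, mul_pow, Real.sq_sqrt (by positivity), Nat.cast_succ]
  have hlower : ∑ k ∈ s, 2 * k * hermiteCoef u k ^ 2 ≤ ∫ x, (v x + x * u x) ^ 2 :=
    calc ∑ k ∈ s, 2 * k * hermiteCoef u k ^ 2
        ≤ ∑ k ∈ Finset.range (s.sup id + 1), 2 * k * hermiteCoef u k ^ 2 :=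
          Finset.sum_le_sum_of_subset_of_nonneg s.subset_range_sup_succ fun _ _ _ => by positivity
      _ = ∑ k ∈ Finset.range (s.sup id), hermiteCoef (fun x => v x + x * u x) k ^ 2 := by
          rw [Finset.sum_range_succ', Finset.sum_congr rfl fun k _ => hweight k]
          simp
      _ ≤ ∫ x, (v x + x * u x) ^ 2 := sum_hermiteCoef_sq_le (hv.add hu.id_mul) _
  simp_rw [add_mul, Finset.sum_add_distrib, one_mul]
  linarith [sum_hermiteCoef_sq_le hu s]

/-! ### Expansion of the square of a Hermite function -/

/-- The Taylor coefficients `binom(2n, n) / 4^n` of `(1 - r)^{-1/2}`. -/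
def invSqrtCoeff (n : ℕ) : ℝ := n.centralBinom / 4 ^ n

lemma invSqrtCoeff_pos (n : ℕ) : 0 < invSqrtCoeff n :=
  div_pos (by exact_mod_cast n.centralBinom_pos) (by positivity)

lemma two_mul_succ_mul_invSqrtCoeff_succ (n : ℕ) :
    2 * ((n : ℝ) + 1) * invSqrtCoeff (n + 1) = (2 * n + 1) * invSqrtCoeff n := by
  have h : ((n : ℝ) + 1) * (n + 1).centralBinom = 2 * (2 * n + 1) * n.centralBinom := by
    exact_mod_cast n.succ_mul_centralBinom_succ
  rw [invSqrtCoeff, invSqrtCoeff, pow_succ]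
  field_simp
  linear_combination 2 * h

lemma invSqrtCoeff_sq_le (n : ℕ) : invSqrtCoeff n ^ 2 ≤ 1 / (n + 1) := by
  induction n with
  | zero => norm_num [invSqrtCoeff]
  | succ n ih =>
    have hsucc : invSqrtCoeff (n + 1) = (2 * n + 1) / (2 * (n + 1)) * invSqrtCoeff n := by
      field_simp
      linear_combination two_mul_succ_mul_invSqrtCoeff_succ n
    rw [hsucc, mul_pow]
    calc ((2 * (n : ℝ) + 1) / (2 * (n + 1))) ^ 2 * invSqrtCoeff n ^ 2
        ≤ ((2 * (n : ℝ) + 1) / (2 * (n + 1))) ^ 2 * (1 / (n + 1)) := by gcongr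
      _ ≤ 1 / (((n + 1 : ℕ) : ℝ) + 1) := by
        push_cast
        rw [div_pow, div_mul_div_comm, div_le_div_iff₀ (by positivity) (by positivity)]
        have : (0 : ℝ) ≤ n := by positivity
        nlinarith

lemma sqrt_invSqrtCoeff_succ_mul_sqrt (n : ℕ) :
    √(invSqrtCoeff (n + 1)) * √(2 * (2 * (n + 1))) =
      √(invSqrtCoeff n) * √(2 * (2 * n + 1)) := by
  rw [← Real.sqrt_mul (invSqrtCoeff_pos _).le, ← Real.sqrt_mul (invSqrtCoeff_pos _).le]
  congr 1
  linear_combination 2 * two_mul_succ_mul_invSqrtCoeff_succ n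

/-- The even Hermite functions `√a_j e_{2j}`, with `a_j` the coefficients of `(1 - r)^{-1/2}`;
this normalization is the one in which their generating function in `j` is elementary. -/
def evenHermite (j : ℕ) (y : ℝ) : ℝ := √(invSqrtCoeff j) * hermiteFun (2 * j) y

section GeneratingFunctions

open PowerSeries (X C coeff constantCoeff)

lemma powerSeries_eq_of_mul_derivative_eq {K : Type*} [Field K] [CharZero K] {u v F G : K⟦X⟧}
    (hu : constantCoeff u ≠ 0) (hF : u * d⁄dX K F = v * F) (hG : u * d⁄dX K G = v * G)
    (h0 : constantCoeff F = constantCoeff G) : F = G := by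
  have hsolve {H : K⟦X⟧} (hH : u * d⁄dX K H = v * H) : d⁄dX K H = u⁻¹ * v * H := by
    rw [mul_assoc, ← hH, ← mul_assoc, PowerSeries.inv_mul_cancel _ hu, one_mul]
  ext n
  induction n using Nat.strong_induction_on with
  | _ n ih =>
    rcases n with _ | n
    · simpa using h0
    · have hn : coeff n (d⁄dX K F) = coeff n (d⁄dX K G) := by
        rw [hsolve hF, hsolve hG, PowerSeries.coeff_mul, PowerSeries.coeff_mul]
        refine Finset.sum_congr rfl fun p hp => ?_
        rw [ih p.2 (Nat.lt_succ_of_le (Finset.HasAntidiagonal.antidiagonal.snd_le hp))]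
      rw [PowerSeries.coeff_derivative, PowerSeries.coeff_derivative] at hn
      exact mul_right_cancel₀ (Nat.cast_add_one_ne_zero n) hn

lemma derivative_mk_invSqrtCoeff :
    2 * (1 - X) * d⁄dX ℝ (.mk invSqrtCoeff) = .mk invSqrtCoeff := by
  set A : ℝ⟦X⟧ := .mk invSqrtCoeff
  have hA : 2 * d⁄dX ℝ A + A = 2 * d⁄dX ℝ (X * A) := by
    ext n
    simp only [two_mul, map_add, PowerSeries.coeff_derivative, PowerSeries.coeff_succ_X_mul,
      A, PowerSeries.coeff_mk]
    linear_combination two_mul_succ_mul_invSqrtCoeff_succ n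
  rw [Derivation.leibniz, PowerSeries.derivative_X, smul_eq_mul, smul_eq_mul] at hA
  linear_combination hA

lemma derivative_mk_hermiteFun_sq (x : ℝ) :
    (1 - X) * (1 + X) ^ 2 * d⁄dX ℝ (.mk fun k => hermiteFun k x ^ 2) =
      (X * (1 + X) + 2 * C x ^ 2 * (1 - X)) * .mk fun k => hermiteFun k x ^ 2 := by
  set P : ℝ⟦X⟧ := .mk fun k => hermiteFun k x ^ 2
  let S : ℝ⟦X⟧ := .mk fun k => √(2 * (k + 1)) * hermiteFun (k + 1) x * hermiteFun k x
  have hS : S + X * S = 2 * (C x * P) := by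
    ext k
    have h := sqrt_mul_hermiteFun_succ k x
    rw [two_mul, map_add, map_add, PowerSeries.coeff_C_mul]
    rcases k with _ | k
    · simp only [S, P, PowerSeries.coeff_zero_X_mul, PowerSeries.coeff_mk]
      rw [Nat.cast_zero, mul_zero, Real.sqrt_zero] at h
      rw [Nat.cast_zero]
      linear_combination hermiteFun 0 x * h
    · simp only [S, P, PowerSeries.coeff_succ_X_mul, PowerSeries.coeff_mk]
      rw [Nat.cast_succ, Nat.add_sub_cancel] at h
      rw [Nat.cast_succ]
      linear_combination hermiteFun (k + 1) x * h
  have hP : d⁄dX ℝ P - X * d⁄dX ℝ (X * P) = C x * (S - X * S) := by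
    ext k
    have h := sqrt_mul_hermiteFun_succ k x
    have hsq : √(2 * ((k : ℝ) + 1)) ^ 2 = 2 * (k + 1) := Real.sq_sqrt (by positivity)
    rw [map_sub, PowerSeries.coeff_C_mul, map_sub, PowerSeries.coeff_derivative]
    rcases k with _ | k
    · simp only [S, P, PowerSeries.coeff_zero_X_mul, PowerSeries.coeff_mk]
      rw [Nat.cast_zero, mul_zero, Real.sqrt_zero] at h
      rw [Nat.cast_zero] at hsq ⊢
      linear_combination √(2 * (0 + 1)) * hermiteFun 1 x / 2 * h - hermiteFun 1 x ^ 2 / 2 * hsq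
    · have hsq' : √(2 * ((k : ℝ) + 1)) ^ 2 = 2 * (k + 1) := Real.sq_sqrt (by positivity)
      simp only [S, P, PowerSeries.coeff_succ_X_mul, PowerSeries.coeff_derivative,
        PowerSeries.coeff_mk]
      rw [Nat.cast_succ, Nat.add_sub_cancel] at h
      rw [Nat.cast_succ] at hsq ⊢
      linear_combination (√(2 * (k + 1 + 1)) * hermiteFun (k + 1 + 1) x -
        √(2 * (k + 1)) * hermiteFun k x) / 2 * h - hermiteFun (k + 1 + 1) x ^ 2 / 2 * hsq +
        hermiteFun k x ^ 2 / 2 * hsq'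
  rw [Derivation.leibniz, PowerSeries.derivative_X, smul_eq_mul, smul_eq_mul] at hP
  linear_combination (1 + X) * hP + C x * (1 - X) * hS

lemma derivative_mk_evenHermite (y : ℝ) :
    2 * (1 + X) ^ 2 * d⁄dX ℝ (.mk fun j => evenHermite j y) =
      (2 * C y ^ 2 - (1 + X)) * .mk fun j => evenHermite j y := by
  set E : ℝ⟦X⟧ := .mk fun j => evenHermite j y
  let O : ℝ⟦X⟧ := .mk fun j =>
    √(invSqrtCoeff j) * √(2 * (2 * j + 1)) * hermiteFun (2 * j + 1) y
  have hO : O + X * O = 2 * (C y * E) := by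
    ext j
    have h := sqrt_mul_hermiteFun_succ (2 * j) y
    rw [two_mul, map_add, map_add, PowerSeries.coeff_C_mul]
    rcases j with _ | j
    · simp only [O, E, evenHermite, PowerSeries.coeff_zero_X_mul, PowerSeries.coeff_mk]
      push_cast [mul_zero, Real.sqrt_zero] at h ⊢
      linear_combination √(invSqrtCoeff 0) * h
    · simp only [O, E, evenHermite, PowerSeries.coeff_succ_X_mul, PowerSeries.coeff_mk]
      rw [show 2 * (j + 1) - 1 = 2 * j + 1 by lia] at h
      push_cast at h ⊢
      linear_combination √(invSqrtCoeff (j + 1)) * h -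
        hermiteFun (2 * j + 1) y * sqrt_invSqrtCoeff_succ_mul_sqrt j
  have hE : 2 * (d⁄dX ℝ E + d⁄dX ℝ (X * E)) = C y * O + E := by
    ext j
    have h := sqrt_mul_hermiteFun_succ (2 * j + 1) y
    have hodd : √(2 * (2 * (j : ℝ) + 1)) ^ 2 = 2 * (2 * j + 1) := Real.sq_sqrt (by positivity)
    have heven : √(2 * (2 * ((j : ℝ) + 1))) ^ 2 = 2 * (2 * (j + 1)) := Real.sq_sqrt (by positivity)
    rw [show ((2 * j + 1 : ℕ) : ℝ) + 1 = 2 * (j + 1) by push_cast; ring, Nat.add_sub_cancel] at h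
    push_cast at h
    rw [two_mul]
    simp only [O, E, map_add, evenHermite, PowerSeries.coeff_C_mul, PowerSeries.coeff_derivative,
      PowerSeries.coeff_succ_X_mul, PowerSeries.coeff_mk]
    rw [show 2 * (j + 1) = 2 * j + 1 + 1 by lia]
    linear_combination √(invSqrtCoeff j) * √(2 * (2 * j + 1)) / 2 * h +
      hermiteFun (2 * j + 1 + 1) y / 2 * (√(2 * (2 * (j + 1))) *
        sqrt_invSqrtCoeff_succ_mul_sqrt j - √(invSqrtCoeff (j + 1)) * heven) -
      √(invSqrtCoeff j) * hermiteFun (2 * j) y / 2 * hodd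
  rw [Derivation.leibniz, PowerSeries.derivative_X, smul_eq_mul, smul_eq_mul] at hE
  linear_combination (1 + X) * hE + C y * hO

lemma hermiteFun_sq_eq (N : ℕ) (x : ℝ) :
    hermiteFun N x ^ 2 = Real.pi ^ (-(1/4 : ℝ)) *
      ∑ j ∈ Finset.range (N + 1), invSqrtCoeff (N - j) * evenHermite j (√2 * x) := by
  set κ := Real.pi ^ (-(1/4 : ℝ))
  set P : ℝ⟦X⟧ := .mk fun k => hermiteFun k x ^ 2 with hP
  set E : ℝ⟦X⟧ := .mk fun j => evenHermite j (√2 * x) with hE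
  set A : ℝ⟦X⟧ := .mk invSqrtCoeff with hA
  have dP := derivative_mk_hermiteFun_sq x
  have dA := derivative_mk_invSqrtCoeff
  have dE := derivative_mk_evenHermite (√2 * x)
  have hscale : (C (√2 * x) : ℝ⟦X⟧) ^ 2 = 2 * C x ^ 2 := by
    rw [map_mul, mul_pow, ← map_pow, Real.sq_sqrt zero_le_two, map_ofNat]
  rw [hscale] at dE
  have hfactor : P = C κ * (E * A) := by
    refine powerSeries_eq_of_mul_derivative_eq
      (u := 2 * ((1 - X) * (1 + X) ^ 2)) (v := 2 * (X * (1 + X) + 2 * C x ^ 2 * (1 - X)))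
      (by rw [map_mul, map_ofNat]; simp) (by linear_combination 2 * dP) ?_ ?_
    · rw [← PowerSeries.smul_eq_C_mul, Derivation.map_smul, Derivation.leibniz,
        PowerSeries.smul_eq_C_mul, PowerSeries.smul_eq_C_mul, smul_eq_mul, smul_eq_mul]
      linear_combination C κ * (1 + X) ^ 2 * E * dA + C κ * (1 - X) * A * dE
    · have hexp : Real.exp (-(1/2) * x ^ 2) ^ 2 = Real.exp (-(1/2) * (√2 * x) ^ 2) := by
        rw [← Real.exp_nat_mul, mul_pow, Real.sq_sqrt zero_le_two]
        ring_nf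
      rw [map_mul, map_mul, hP, hE, hA, PowerSeries.constantCoeff_mk, PowerSeries.constantCoeff_mk,
        PowerSeries.constantCoeff_mk, hermiteFun_zero, mul_pow, hexp, PowerSeries.constantCoeff_C,
        evenHermite, mul_zero, hermiteFun_zero]
      simp only [invSqrtCoeff, Nat.centralBinom_zero, Nat.cast_one, pow_zero, div_one,
        Real.sqrt_one]
      ring
  have hN := congrArg (coeff N) hfactor
  rw [PowerSeries.coeff_C_mul, PowerSeries.coeff_mul,
    Finset.Nat.sum_antidiagonal_eq_sum_range_succ_mk] at hN
  simpa [P, E, A, mul_comm] using hN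

end GeneratingFunctions

/-! ### The `L²` norm of a product of two Hermite functions -/

lemma gaussianDecay_evenHermite (j : ℕ) : GaussianDecay fun x => evenHermite j (√2 * x) :=
  ((gaussianDecay_hermiteFun (2 * j)).const_mul _).comp_const_mul (by positivity)

lemma integral_evenHermite_mul (j l : ℕ) :
    ∫ x, evenHermite j (√2 * x) * evenHermite l (√2 * x) =
      if j = l then (√2)⁻¹ * invSqrtCoeff l else 0 := by
  have hcoef : ∫ y, evenHermite j y * evenHermite l y = √(invSqrtCoeff j) *
      √(invSqrtCoeff l) * hermiteCoef (hermiteFun (2 * l)) (2 * j) := by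
    rw [hermiteCoef, ← integral_const_mul]
    congr 1 with y
    simp only [evenHermite]
    ring
  rw [Measure.integral_comp_mul_left (fun y => evenHermite j y * evenHermite l y), hcoef,
    hermiteCoef_hermiteFun, abs_of_nonneg (by positivity), smul_eq_mul]
  rcases eq_or_ne j l with rfl | h
  · simp [Real.mul_self_sqrt (invSqrtCoeff_pos j).le]
  · simp [h]

lemma integral_hermiteFun_mul_sq {N M : ℕ} (h : M ≤ N) :
    ∫ x, (hermiteFun N x * hermiteFun M x) ^ 2 = (Real.pi ^ (-(1/4 : ℝ))) ^ 2 * ((√2)⁻¹ *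
      ∑ l ∈ Finset.range (M + 1),
        invSqrtCoeff l * invSqrtCoeff (N - l) * invSqrtCoeff (M - l)) := by
  have hexpand (x : ℝ) : (hermiteFun N x * hermiteFun M x) ^ 2 = (Real.pi ^ (-(1/4 : ℝ))) ^ 2 *
      ∑ l ∈ Finset.range (M + 1), ∑ j ∈ Finset.range (N + 1),
        invSqrtCoeff (M - l) * invSqrtCoeff (N - j) *
          (evenHermite j (√2 * x) * evenHermite l (√2 * x)) := by
    rw [mul_pow, hermiteFun_sq_eq, hermiteFun_sq_eq M, mul_mul_mul_comm, Finset.sum_mul_sum,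
      ← pow_two, Finset.sum_comm]
    congr! 3
    ring
  have hdecay (l j : ℕ) : GaussianDecay fun x => invSqrtCoeff (M - l) * invSqrtCoeff (N - j) *
      (evenHermite j (√2 * x) * evenHermite l (√2 * x)) :=
    ((gaussianDecay_evenHermite j).mul (gaussianDecay_evenHermite l)).const_mul _
  simp_rw [hexpand]
  rw [integral_const_mul, integral_finsetSum _ fun l _ =>
    (GaussianDecay.finset_sum _ fun j _ => hdecay l j).integrable, Finset.mul_sum (a := (√2)⁻¹)]
  congr 1
  refine Finset.sum_congr rfl fun l hl => ?_
  have hlN : l ∈ Finset.range (N + 1) := Finset.range_mono (by lia) hl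
  rw [integral_finsetSum _ fun j _ => (hdecay l j).integrable]
  simp_rw [integral_const_mul, integral_evenHermite_mul]
  rw [Finset.sum_eq_single_of_mem l hlN fun j _ hj => by simp [hj], if_pos rfl]
  ring

lemma invSqrtCoeff_le_sqrt {i N : ℕ} (h : N ≤ 2 * i) : invSqrtCoeff i ≤ √(2 / (N + 1)) := by
  refine Real.le_sqrt_of_sq_le ((invSqrtCoeff_sq_le i).trans ?_)
  rw [div_le_div_iff₀ (by positivity) (by positivity)]
  have : (N : ℝ) ≤ 2 * i := by exact_mod_cast h
  linarith

lemma invSqrtCoeff_mul_le (i j : ℕ) :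
    invSqrtCoeff i * invSqrtCoeff j ≤ (1 / ((i : ℝ) + 1) + 1 / ((j : ℝ) + 1)) / 2 := by
  linarith [invSqrtCoeff_sq_le i, invSqrtCoeff_sq_le j,
    two_mul_le_add_sq (invSqrtCoeff i) (invSqrtCoeff j)]

lemma invSqrtCoeff_mul_mul_le {l M N : ℕ} (hMN : M ≤ N) :
    invSqrtCoeff l * invSqrtCoeff (N - l) * invSqrtCoeff (M - l) ≤
      √(2 / (N + 1)) * (1 / ((l : ℝ) + 1) + 1 / (((M - l : ℕ) : ℝ) + 1)) := by
  have hl : 0 < 1 / ((l : ℝ) + 1) := by positivity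
  have hMl : 0 < 1 / (((M - l : ℕ) : ℝ) + 1) := by positivity
  have hpos (i j : ℕ) : 0 ≤ invSqrtCoeff i * invSqrtCoeff j :=
    (mul_pos (invSqrtCoeff_pos i) (invSqrtCoeff_pos j)).le
  rcases le_total N (2 * l) with hN | hN
  · have hmono : 1 / (((N - l : ℕ) : ℝ) + 1) ≤ 1 / (((M - l : ℕ) : ℝ) + 1) := by gcongr
    rw [mul_assoc]
    exact mul_le_mul (invSqrtCoeff_le_sqrt hN)
      (by linarith [invSqrtCoeff_mul_le (N - l) (M - l)]) (hpos _ _) (by positivity)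
  · rw [mul_comm (invSqrtCoeff l), mul_assoc]
    exact mul_le_mul (invSqrtCoeff_le_sqrt (by lia))
      (by linarith [invSqrtCoeff_mul_le l (M - l)]) (hpos _ _) (by positivity)

lemma sum_invSqrtCoeff_mul_mul_le {N M : ℕ} (h : M ≤ N) :
    ∑ l ∈ Finset.range (M + 1), invSqrtCoeff l * invSqrtCoeff (N - l) * invSqrtCoeff (M - l) ≤
      √(2 / (N + 1)) * (2 * (1 + Real.log (N + 1))) := by
  have hharmonic : ∑ l ∈ Finset.range (M + 1), 1 / ((l : ℝ) + 1) ≤ 1 + Real.log (N + 1) :=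
    calc ∑ l ∈ Finset.range (M + 1), 1 / ((l : ℝ) + 1)
        = ((harmonic (M + 1) : ℚ) : ℝ) := by simp [harmonic]
      _ ≤ 1 + Real.log ((M + 1 : ℕ) : ℝ) := harmonic_le_one_add_log _
      _ ≤ 1 + Real.log (N + 1) := by
        push_cast
        gcongr
  have hreflect : ∑ l ∈ Finset.range (M + 1), 1 / (((M - l : ℕ) : ℝ) + 1) =
      ∑ l ∈ Finset.range (M + 1), 1 / ((l : ℝ) + 1) := by
    simpa using Finset.sum_range_reflect (fun l => 1 / ((l : ℝ) + 1)) (M + 1)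
  refine (Finset.sum_le_sum fun l _ => invSqrtCoeff_mul_mul_le h).trans ?_
  rw [← Finset.mul_sum, Finset.sum_add_distrib, hreflect, ← two_mul]
  gcongr

lemma one_add_log_le_rpow {ε X : ℝ} (hε : 0 < ε) (hX : 1 ≤ X) :
    1 + Real.log X ≤ (1 + 1 / ε) * X ^ ε := by
  have hlog := Real.log_le_rpow_div (by linarith : 0 ≤ X) hε
  have hone : 1 ≤ X ^ ε := Real.one_le_rpow hX hε.le
  calc 1 + Real.log X ≤ X ^ ε + X ^ ε / ε := by linarith
    _ = (1 + 1 / ε) * X ^ ε := by ring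

lemma integral_hermiteFun_mul_sq_le {ε : ℝ} (hε : 0 < ε) (N M : ℕ) :
    ∫ x, (hermiteFun N x * hermiteFun M x) ^ 2 ≤
      2 * (1 + 1 / ε) * (((max N M : ℕ) : ℝ) + 1) ^ (ε - 1/2) := by
  wlog h : M ≤ N generalizing N M
  · simpa only [mul_comm (hermiteFun M _), max_comm M] using this M N (by lia)
  rw [max_eq_left h, integral_hermiteFun_mul_sq h]
  have hN : (0 : ℝ) < N + 1 := by positivity
  have hpi : (Real.pi ^ (-(1/4 : ℝ))) ^ 2 ≤ 1 := pow_le_one₀ (by positivity)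
    (Real.rpow_le_one_of_one_le_of_nonpos (by linarith [Real.pi_gt_three]) (by norm_num))
  have hsum := sum_invSqrtCoeff_mul_mul_le h
  have hsum_nonneg : 0 ≤ ∑ l ∈ Finset.range (M + 1),
      invSqrtCoeff l * invSqrtCoeff (N - l) * invSqrtCoeff (M - l) :=
    Finset.sum_nonneg fun l _ => (mul_pos (mul_pos (invSqrtCoeff_pos _)
      (invSqrtCoeff_pos _)) (invSqrtCoeff_pos _)).le
  have hsqrt : √(2 / ((N : ℝ) + 1)) = √2 * ((N : ℝ) + 1) ^ (-(1/2) : ℝ) := by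
    rw [Real.sqrt_div zero_le_two, Real.rpow_neg hN.le, ← Real.sqrt_eq_rpow, div_eq_mul_inv]
  calc (Real.pi ^ (-(1/4 : ℝ))) ^ 2 * ((√2)⁻¹ * ∑ l ∈ Finset.range (M + 1),
        invSqrtCoeff l * invSqrtCoeff (N - l) * invSqrtCoeff (M - l))
      ≤ 1 * ((√2)⁻¹ * (√(2 / (N + 1)) * (2 * (1 + Real.log (N + 1))))) := by gcongr
    _ = 2 * (1 + Real.log (N + 1)) * ((N : ℝ) + 1) ^ (-(1/2) : ℝ) := by
        rw [hsqrt]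
        field_simp
    _ ≤ 2 * ((1 + 1 / ε) * ((N : ℝ) + 1) ^ ε) * ((N : ℝ) + 1) ^ (-(1/2) : ℝ) := by
        gcongr
        exact one_add_log_le_rpow hε (by linarith)
    _ = 2 * (1 + 1 / ε) * ((N : ℝ) + 1) ^ (ε - 1/2) := by
        rw [sub_eq_add_neg, Real.rpow_add hN]
        ring

/-! ### The uniform bound -/

lemma GaussianDecay.sq_le {u v : ℝ → ℝ} (hu : GaussianDecay u) (hv : GaussianDecay v)
    (h : ∀ x, HasDerivAt u (v x) x) {t : ℝ} (ht : 0 < t) (x : ℝ) :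
    u x ^ 2 ≤ t * (∫ y, u y ^ 2) + t⁻¹ * ∫ y, v y ^ 2 := by
  have hderiv (y : ℝ) : HasDerivAt (fun y => u y ^ 2) (2 * (u y * v y)) y :=
    ((h y).fun_pow 2).congr_deriv (by push_cast; ring)
  have huv := ((hu.mul hv).const_mul 2).integrable
  have hright := ((hu.sq.const_mul t).add (hv.sq.const_mul t⁻¹)).integrable
  have hyoung (y : ℝ) : 2 * (u y * v y) ≤ t * u y ^ 2 + t⁻¹ * v y ^ 2 := by
    have hgap : t * u y ^ 2 + t⁻¹ * v y ^ 2 - 2 * (u y * v y) = t⁻¹ * (t * u y - v y) ^ 2 := by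
      field_simp
      ring
    exact sub_nonneg.1 (hgap ▸ by positivity)
  have hlim := tendsto_zero_of_hasDerivAt_of_integrableOn_Iic (a := x) (fun y _ => hderiv y)
    huv.integrableOn hu.sq.integrable.integrableOn
  calc u x ^ 2 = ∫ y in Iic x, 2 * (u y * v y) := by
        rw [integral_Iic_of_hasDerivAt_of_tendsto' (fun y _ => hderiv y) huv.integrableOn hlim,
          sub_zero]
    _ ≤ ∫ y in Iic x, (t * u y ^ 2 + t⁻¹ * v y ^ 2) :=
        setIntegral_mono huv.integrableOn hright.integrableOn hyoung
    _ ≤ ∫ y, (t * u y ^ 2 + t⁻¹ * v y ^ 2) := setIntegral_le_integral hright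
        (Eventually.of_forall fun y => by simp only [Pi.zero_apply]; positivity)
    _ = t * (∫ y, u y ^ 2) + t⁻¹ * ∫ y, v y ^ 2 := by
        rw [integral_add (hu.sq.const_mul t).integrable (hv.sq.const_mul t⁻¹).integrable,
          integral_const_mul, integral_const_mul]

lemma deriv_hermiteFun_sq_add_mul_hermiteFun_sq (k : ℕ) (x : ℝ) :
    deriv (hermiteFun k) x ^ 2 + (x * hermiteFun k x) ^ 2 =
      k * hermiteFun (k - 1) x ^ 2 + (k + 1) * hermiteFun (k + 1) x ^ 2 := by
  have hk : √(2 * k) ^ 2 = 2 * k := Real.sq_sqrt (by positivity)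
  have hk' : √(2 * (k + 1)) ^ 2 = 2 * (k + 1) := Real.sq_sqrt (by positivity)
  rw [(hasDerivAt_hermiteFun k x).deriv, mul_hermiteFun]
  linear_combination hermiteFun (k - 1) x ^ 2 / 2 * hk + hermiteFun (k + 1) x ^ 2 / 2 * hk'

lemma integral_hermiteFun_mul_deriv_sq_le {ε : ℝ} (hε : 0 < ε) (hε' : ε ≤ 1 / 2) (k : ℕ) :
    ∫ x, (hermiteFun k x * deriv (hermiteFun k) x) ^ 2 ≤
      4 * (1 + 1 / ε) * ((k : ℝ) + 1) ^ (ε + 1/2) := by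
  have hdecay (m : ℕ) := ((gaussianDecay_hermiteFun k).mul (gaussianDecay_hermiteFun m)).sq
  have hbound (m : ℕ) : ∫ x, (hermiteFun k x * hermiteFun m x) ^ 2 ≤
      2 * (1 + 1 / ε) * ((k : ℝ) + 1) ^ (ε - 1/2) := by
    refine (integral_hermiteFun_mul_sq_le hε k m).trans ?_
    gcongr ?_ * ?_
    exact Real.rpow_le_rpow_of_nonpos (by positivity) (by gcongr; exact le_max_left _ _)
      (by linarith)
  calc ∫ x, (hermiteFun k x * deriv (hermiteFun k) x) ^ 2
      ≤ ∫ x, (k * (hermiteFun k x * hermiteFun (k - 1) x) ^ 2 +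
          (k + 1) * (hermiteFun k x * hermiteFun (k + 1) x) ^ 2) := by
        refine integral_mono
          ((gaussianDecay_hermiteFun k).mul (gaussianDecay_deriv_hermiteFun k)).sq.integrable
          (((hdecay _).const_mul _).add ((hdecay _).const_mul _)).integrable fun x => ?_
        have hladder := congrArg (hermiteFun k x ^ 2 * ·)
          (deriv_hermiteFun_sq_add_mul_hermiteFun_sq k x)
        linarith [sq_nonneg (hermiteFun k x * (x * hermiteFun k x))]
    _ = k * (∫ x, (hermiteFun k x * hermiteFun (k - 1) x) ^ 2) +
          (k + 1) * ∫ x, (hermiteFun k x * hermiteFun (k + 1) x) ^ 2 := by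
        rw [integral_add ((hdecay _).const_mul _).integrable ((hdecay _).const_mul _).integrable,
          integral_const_mul, integral_const_mul]
    _ ≤ (k + 1) * (2 * (1 + 1 / ε) * ((k : ℝ) + 1) ^ (ε - 1/2)) +
          (k + 1) * (2 * (1 + 1 / ε) * ((k : ℝ) + 1) ^ (ε - 1/2)) := by
        gcongr
        · linarith
        · exact hbound _
        · exact hbound _
    _ = 4 * (1 + 1 / ε) * ((k : ℝ) + 1) ^ (ε + 1/2) := by
        rw [show ε + 1/2 = 1 + (ε - 1/2) by ring, Real.rpow_add (by positivity), Real.rpow_one]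
        ring

lemma hermiteFun_pow_four_le {ε : ℝ} (hε : 0 < ε) (hε' : ε ≤ 1 / 2) (k : ℕ) (x : ℝ) :
    hermiteFun k x ^ 4 ≤ 18 * (1 + 1 / ε) * ((k : ℝ) + 1) ^ ε := by
  have hk := gaussianDecay_hermiteFun k
  have hX : 0 < (k : ℝ) + 1 := by positivity
  have hderiv (y : ℝ) : HasDerivAt (fun y => hermiteFun k y ^ 2)
      (2 * (hermiteFun k y * deriv (hermiteFun k) y)) y :=
    ((hasDerivAt_hermiteFun k y).differentiableAt.hasDerivAt.fun_pow 2).congr_deriv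
      (by push_cast; ring)
  have hfour : ∫ y, (hermiteFun k y ^ 2) ^ 2 ≤
      2 * (1 + 1 / ε) * ((k : ℝ) + 1) ^ (ε - 1/2) := by
    simpa only [← pow_two, max_self] using integral_hermiteFun_mul_sq_le hε k k
  calc hermiteFun k x ^ 4 = (hermiteFun k x ^ 2) ^ 2 := by ring
    _ ≤ ((k : ℝ) + 1) ^ (1/2 : ℝ) * (∫ y, (hermiteFun k y ^ 2) ^ 2) +
          (((k : ℝ) + 1) ^ (1/2 : ℝ))⁻¹ *
            ∫ y, (2 * (hermiteFun k y * deriv (hermiteFun k) y)) ^ 2 :=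
        hk.sq.sq_le ((hk.mul (gaussianDecay_deriv_hermiteFun k)).const_mul 2) hderiv
          (by positivity) x
    _ ≤ ((k : ℝ) + 1) ^ (1/2 : ℝ) * (2 * (1 + 1 / ε) * ((k : ℝ) + 1) ^ (ε - 1/2)) +
          (((k : ℝ) + 1) ^ (1/2 : ℝ))⁻¹ *
            (2 ^ 2 * (4 * (1 + 1 / ε) * ((k : ℝ) + 1) ^ (ε + 1/2))) := by
        simp_rw [mul_pow (2 : ℝ), integral_const_mul]
        gcongr
        exact integral_hermiteFun_mul_deriv_sq_le hε hε' k
    _ = 18 * (1 + 1 / ε) * ((k : ℝ) + 1) ^ ε := by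
        rw [Real.rpow_sub hX, Real.rpow_add hX]
        field_simp
        ring

lemma hermiteFun_sq_le {ε : ℝ} (hε : 0 < ε) (hε' : ε ≤ 1 / 2) (k : ℕ) (x : ℝ) :
    hermiteFun k x ^ 2 ≤ 18 * (1 + 1 / ε) * ((k : ℝ) + 1) ^ ε := by
  have hone : 1 ≤ 18 * (1 + 1 / ε) * ((k : ℝ) + 1) ^ ε := by
    have hpow : 1 ≤ ((k : ℝ) + 1) ^ ε := Real.one_le_rpow (by simp) hε.le
    have hinv : 0 < 1 / ε := by positivity
    nlinarith
  refine le_of_sq_le_sq ?_ (zero_le_one.trans hone)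
  calc (hermiteFun k x ^ 2) ^ 2 = hermiteFun k x ^ 4 := by ring
    _ ≤ 18 * (1 + 1 / ε) * ((k : ℝ) + 1) ^ ε := hermiteFun_pow_four_le hε hε' k x
    _ ≤ _ := le_self_pow₀ hone two_ne_zero

/-! ### Products of Hermite functions -/

/-- The product `∏ j, e_{n_j}` of finitely many one-dimensional Hermite functions. -/
def hermiteProd {ι : Type*} [Fintype ι] (n : ι → ℕ) (x : ℝ) : ℝ := ∏ j, hermiteFun (n j) x

lemma rpow_le_mul_rpow_of_le_mul {X Y c θ : ℝ} (hX : 0 < X) (hY : 0 < Y) (hc : 1 ≤ c)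
    (h : X ≤ c * Y) (hθ : θ ∈ Set.Icc (-1) 0) : Y ^ θ ≤ c * X ^ θ := by
  have hc0 : 0 < c := by linarith
  calc Y ^ θ = c ^ (-θ) * (c * Y) ^ θ := by
        rw [Real.mul_rpow hc0.le hY.le, ← mul_assoc, ← Real.rpow_add hc0, neg_add_cancel,
          Real.rpow_zero, one_mul]
    _ ≤ c ^ (1 : ℝ) * X ^ θ := by
        gcongr ?_ * ?_
        · exact Real.rpow_le_rpow_of_exponent_le hc (by linarith [hθ.1])
        · exact Real.rpow_le_rpow_of_nonpos hX h hθ.2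
    _ = c * X ^ θ := by rw [Real.rpow_one]

section Products

variable {ι : Type*} [Fintype ι]

lemma gaussianDecay_hermiteProd [Nonempty ι] (n : ι → ℕ) : GaussianDecay (hermiteProd n) :=
  .finset_prod Finset.univ_nonempty fun j _ => gaussianDecay_hermiteFun (n j)

lemma prod_hermiteFun_sq_le {ε : ℝ} (hε : 0 < ε) (hε' : ε ≤ 1 / 2) (n : ι → ℕ) (s : Finset ι)
    (x : ℝ) : ∏ j ∈ s, hermiteFun (n j) x ^ 2 ≤
      (18 * (1 + 1 / ε) * (((Finset.univ.sup n : ℕ) : ℝ) + 1) ^ ε) ^ Fintype.card ι := by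
  have hone : 1 ≤ 18 * (1 + 1 / ε) * (((Finset.univ.sup n : ℕ) : ℝ) + 1) ^ ε := by
    have hpow : 1 ≤ (((Finset.univ.sup n : ℕ) : ℝ) + 1) ^ ε := Real.one_le_rpow (by simp) hε.le
    have hinv : 0 < 1 / ε := by positivity
    nlinarith
  calc ∏ j ∈ s, hermiteFun (n j) x ^ 2
      ≤ ∏ _j ∈ s, 18 * (1 + 1 / ε) * (((Finset.univ.sup n : ℕ) : ℝ) + 1) ^ ε := by
        refine Finset.prod_le_prod (fun _ _ => sq_nonneg _) fun j _ =>
          (hermiteFun_sq_le hε hε' (n j) x).trans ?_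
        gcongr
        exact Finset.le_sup (Finset.mem_univ j)
    _ ≤ _ := by
        rw [Finset.prod_const]
        exact pow_le_pow_right₀ hone (Finset.card_le_univ s)

lemma exists_integral_hermiteProd_sq_le [Nontrivial ι] {ε : ℝ} (hε : 0 < ε) (hε' : ε ≤ 1 / 2) :
    ∃ K > 0, ∀ n : ι → ℕ, ∫ x, hermiteProd n x ^ 2 ≤
      K * (((Finset.univ.sup n : ℕ) : ℝ) + 1) ^ (ε - 1/2) := by
  classical
  set r := Fintype.card ι
  have hr0 : (1 : ℝ) ≤ r := by exact_mod_cast Fintype.card_pos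
  set η := ε / (2 * r) with hη
  have hη0 : 0 < η := by positivity
  have hη' : η ≤ 1 / 2 := (div_le_self hε.le (by linarith)).trans hε'
  refine ⟨(18 * (1 + 1 / η)) ^ r * (2 * (1 + 1 / (ε / 2))), by positivity, fun n => ?_⟩
  set X : ℝ := ((Finset.univ.sup n : ℕ) : ℝ) + 1 with hX
  have hX0 : 0 < X := by positivity
  obtain ⟨i, -, hi⟩ := Finset.exists_mem_eq_sup _ Finset.univ_nonempty n
  obtain ⟨j, hji⟩ := exists_ne i
  have hmax : max (n i) (n j) = Finset.univ.sup n := by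
    rw [← hi]
    exact max_eq_left (Finset.le_sup (Finset.mem_univ j))
  have hpair := (gaussianDecay_hermiteFun (n i)).mul (gaussianDecay_hermiteFun (n j))
  calc ∫ x, hermiteProd n x ^ 2
      ≤ ∫ x, (18 * (1 + 1 / η) * X ^ η) ^ r * (hermiteFun (n i) x * hermiteFun (n j) x) ^ 2 := by
        refine integral_mono (gaussianDecay_hermiteProd n).sq.integrable
          (hpair.sq.const_mul _).integrable fun x => ?_
        simp only [hermiteProd]
        rw [← Finset.mul_prod_erase _ _ (Finset.mem_univ i), ← Finset.mul_prod_erase _ _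
          (Finset.mem_erase.2 ⟨hji, Finset.mem_univ j⟩), ← mul_assoc, mul_pow, mul_comm,
          ← Finset.prod_pow]
        gcongr
        exact prod_hermiteFun_sq_le hη0 hη' n _ x
    _ ≤ (18 * (1 + 1 / η) * X ^ η) ^ r * (2 * (1 + 1 / (ε / 2)) * X ^ (ε / 2 - 1/2)) := by
        rw [integral_const_mul, hX, ← hmax]
        gcongr
        exact integral_hermiteFun_mul_sq_le (half_pos hε) _ _
    _ = (18 * (1 + 1 / η)) ^ r * (2 * (1 + 1 / (ε / 2))) * X ^ (η * r + (ε / 2 - 1/2)) := by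
        rw [mul_pow, Real.rpow_add hX0, Real.rpow_mul_natCast hX0.le]
        ring
    _ = _ := by
        rw [show η * r = ε / 2 by rw [hη]; field_simp]
        ring_nf

section Update

variable [DecidableEq ι]

lemma hasDerivAt_hermiteProd (n : ι → ℕ) (x : ℝ) :
    HasDerivAt (hermiteProd n) (∑ i, deriv (hermiteFun (n i)) x *
      ∏ j ∈ Finset.univ.erase i, hermiteFun (n j) x) x :=
  (HasDerivAt.fun_finsetProd fun i _ =>
    (hasDerivAt_hermiteFun (n i) x).differentiableAt.hasDerivAt).congr_deriv
      (by simp only [smul_eq_mul, mul_comm])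

lemma hermiteProd_update (n : ι → ℕ) (i : ι) (m : ℕ) (x : ℝ) :
    hermiteProd (Function.update n i m) x =
      hermiteFun m x * ∏ j ∈ Finset.univ.erase i, hermiteFun (n j) x := by
  rw [hermiteProd, ← Finset.mul_prod_erase _ _ (Finset.mem_univ i), Function.update_self]
  congr 1
  exact Finset.prod_congr rfl fun j hj => by rw [Function.update_of_ne (Finset.ne_of_mem_erase hj)]

lemma deriv_hermiteProd_add_mul_sq_le [Nonempty ι] (n : ι → ℕ) (x : ℝ) :
    (deriv (hermiteProd n) x + x * hermiteProd n x) ^ 2 ≤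
      2 * Fintype.card ι * ∑ i, (n i * hermiteProd (Function.update n i (n i - 1)) x ^ 2 +
        (n i + 1) * hermiteProd (Function.update n i (n i + 1)) x ^ 2) := by
  have hsplit (i : ι) : x * hermiteProd n x =
      x * hermiteFun (n i) x * ∏ j ∈ Finset.univ.erase i, hermiteFun (n j) x := by
    rw [hermiteProd, ← Finset.mul_prod_erase _ _ (Finset.mem_univ i), mul_assoc]
  have hterm (i : ι) : n i * hermiteProd (Function.update n i (n i - 1)) x ^ 2 +
      (n i + 1) * hermiteProd (Function.update n i (n i + 1)) x ^ 2 =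
      (deriv (hermiteFun (n i)) x * ∏ j ∈ Finset.univ.erase i, hermiteFun (n j) x) ^ 2 +
        (x * hermiteProd n x) ^ 2 := by
    rw [hsplit i, hermiteProd_update, hermiteProd_update]
    linear_combination -(∏ j ∈ Finset.univ.erase i, hermiteFun (n j) x) ^ 2 *
      deriv_hermiteFun_sq_add_mul_hermiteFun_sq (n i) x
  have hcard : (1 : ℝ) ≤ Fintype.card ι := by exact_mod_cast Fintype.card_pos
  simp_rw [hterm, Finset.sum_add_distrib, (hasDerivAt_hermiteProd n x).deriv]
  rw [Finset.sum_const, Finset.card_univ, nsmul_eq_mul]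
  have hsq := sq_sum_le_card_mul_sum_sq (s := Finset.univ) (f := fun i =>
    deriv (hermiteFun (n i)) x * ∏ j ∈ Finset.univ.erase i, hermiteFun (n j) x)
  rw [Finset.card_univ] at hsq
  have hx : (x * hermiteProd n x) ^ 2 ≤
      Fintype.card ι * (Fintype.card ι * (x * hermiteProd n x) ^ 2) := by
    rw [← mul_assoc]
    exact le_mul_of_one_le_left (sq_nonneg _) (one_le_mul_of_one_le_of_one_le hcard hcard)
  linarith [add_sq_le (a := ∑ i, deriv (hermiteFun (n i)) x *
    ∏ j ∈ Finset.univ.erase i, hermiteFun (n j) x) (b := x * hermiteProd n x)]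

lemma sup_add_one_le_two_mul_sup_update_add_one (n : ι → ℕ) (i : ι) {m : ℕ} (hm : n i ≤ m + 1) :
    ((Finset.univ.sup n : ℕ) : ℝ) + 1 ≤
      2 * (((Finset.univ.sup (Function.update n i m) : ℕ) : ℝ) + 1) := by
  have hsup : Finset.univ.sup n ≤ Finset.univ.sup (Function.update n i m) + 1 := by
    refine Finset.sup_le fun j _ => ?_
    have hj := Finset.le_sup (f := Function.update n i m) (Finset.mem_univ j)
    rcases eq_or_ne j i with rfl | hji
    · rw [Function.update_self] at hj
      lia
    · rw [Function.update_of_ne hji] at hj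
      lia
  have hdouble :
      Finset.univ.sup n + 1 ≤ 2 * (Finset.univ.sup (Function.update n i m) + 1) := by lia
  exact_mod_cast hdouble

end Update

lemma gaussianDecay_deriv_hermiteProd [Nontrivial ι] (n : ι → ℕ) :
    GaussianDecay (deriv (hermiteProd n)) := by
  classical
  rw [funext fun x => (hasDerivAt_hermiteProd n x).deriv]
  exact .finset_sum _ fun i _ => (gaussianDecay_deriv_hermiteFun (n i)).mul
    (.finset_prod Finset.univ_nontrivial.erase_nonempty fun j _ => gaussianDecay_hermiteFun (n j))

lemma integral_deriv_hermiteProd_add_mul_sq_le [Nontrivial ι] {K θ : ℝ} (hK : 0 ≤ K)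
    (hθ : θ ∈ Set.Icc (-1) 0)
    (h : ∀ n : ι → ℕ, ∫ x, hermiteProd n x ^ 2 ≤ K * (((Finset.univ.sup n : ℕ) : ℝ) + 1) ^ θ)
    (n : ι → ℕ) :
    ∫ x, (deriv (hermiteProd n) x + x * hermiteProd n x) ^ 2 ≤
      8 * Fintype.card ι ^ 2 * (((Finset.univ.sup n : ℕ) : ℝ) + 1) *
        (K * (((Finset.univ.sup n : ℕ) : ℝ) + 1) ^ θ) := by
  classical
  set X : ℝ := ((Finset.univ.sup n : ℕ) : ℝ) + 1 with hX
  have hn (i : ι) : (n i : ℝ) + 1 ≤ X := by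
    rw [hX]
    gcongr
    exact Finset.le_sup (Finset.mem_univ i)
  have hupdate (i : ι) {m : ℕ} (hm : n i ≤ m + 1) :
      ∫ x, hermiteProd (Function.update n i m) x ^ 2 ≤ K * (2 * X ^ θ) := by
    refine (h _).trans ?_
    gcongr
    exact rpow_le_mul_rpow_of_le_mul (by positivity) (by positivity) one_le_two
      (sup_add_one_le_two_mul_sup_update_add_one n i hm) hθ
  have hsq (n : ι → ℕ) := (gaussianDecay_hermiteProd n).sq
  have hterm (i : ι) := ((hsq (Function.update n i (n i - 1))).const_mul (n i)).add
    ((hsq (Function.update n i (n i + 1))).const_mul ((n i : ℝ) + 1))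
  calc ∫ x, (deriv (hermiteProd n) x + x * hermiteProd n x) ^ 2
      ≤ ∫ x, 2 * (Fintype.card ι : ℝ) *
          ∑ i, (n i * hermiteProd (Function.update n i (n i - 1)) x ^ 2 +
            (n i + 1) * hermiteProd (Function.update n i (n i + 1)) x ^ 2) :=
        integral_mono ((gaussianDecay_deriv_hermiteProd n).add
          (gaussianDecay_hermiteProd n).id_mul).sq.integrable
          ((GaussianDecay.finset_sum _ fun i _ => hterm i).const_mul _).integrable
          (deriv_hermiteProd_add_mul_sq_le n)
    _ = 2 * Fintype.card ι * ∑ i, (n i * (∫ x, hermiteProd (Function.update n i (n i - 1)) x ^ 2) +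
          (n i + 1) * ∫ x, hermiteProd (Function.update n i (n i + 1)) x ^ 2) := by
        rw [integral_const_mul, integral_finsetSum _ fun i _ => (hterm i).integrable]
        refine congrArg _ (Finset.sum_congr rfl fun i _ => ?_)
        rw [integral_add ((hsq _).const_mul _).integrable ((hsq _).const_mul _).integrable,
          integral_const_mul, integral_const_mul]
    _ ≤ 2 * Fintype.card ι * ∑ _i : ι, (X * (K * (2 * X ^ θ)) + X * (K * (2 * X ^ θ))) := by
        gcongr with i
        · linarith [hn i]
        · exact hupdate i (by lia)
        · exact hn i
        · exact hupdate i (by lia)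
    _ = 8 * Fintype.card ι ^ 2 * X * (K * X ^ θ) := by
        rw [Finset.sum_const, Finset.card_univ, nsmul_eq_mul]
        ring

end Products

/-! ### Sobolev bounds on the line and their tensor products -/

/-- `B` bounds the squared `L²` norm of `u` and `X * B` its squared `ℋ¹(ℝ)` norm, both read off the
partial sums of the Hermite expansion. -/
def SobolevBound (B X : ℝ) (u : ℝ → ℝ) : Prop :=
  ∀ s : Finset ℕ, ∑ k ∈ s, hermiteCoef u k ^ 2 ≤ B ∧
    ∑ k ∈ s, (2 * k + 1) * hermiteCoef u k ^ 2 ≤ X * B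

lemma GaussianDecay.sobolevBound {u v : ℝ → ℝ} (hu : GaussianDecay u) (hv : GaussianDecay v)
    (h : ∀ x, HasDerivAt u (v x) x) {A c X : ℝ} (hA : 0 ≤ A) (hc : 0 ≤ c) (hX : 1 ≤ X)
    (h₀ : ∫ x, u x ^ 2 ≤ A) (h₁ : ∫ x, (v x + x * u x) ^ 2 ≤ c * X * A) :
    SobolevBound ((1 + c) * A) X u := by
  refine fun s => ⟨(sum_hermiteCoef_sq_le hu s).trans ?_,
    (sum_mul_hermiteCoef_sq_le hu hv h s).trans ?_⟩
  · nlinarith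
  · nlinarith

lemma exists_sobolevBound_hermiteProd {ι : Type*} [Fintype ι] [Nontrivial ι] {ε : ℝ} (hε : 0 < ε)
    (hε' : ε ≤ 1 / 2) :
    ∃ K > 0, ∀ n : ι → ℕ,
      SobolevBound (K * (((Finset.univ.sup n : ℕ) : ℝ) + 1) ^ (ε - 1/2))
        (((Finset.univ.sup n : ℕ) : ℝ) + 1) (hermiteProd n) := by
  classical
  obtain ⟨K, hK, h⟩ := exists_integral_hermiteProd_sq_le (ι := ι) hε hε'
  refine ⟨(1 + 8 * Fintype.card ι ^ 2) * K, by positivity, fun n => ?_⟩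
  rw [mul_assoc]
  exact (gaussianDecay_hermiteProd n).sobolevBound (gaussianDecay_deriv_hermiteProd n)
    (fun x => (hasDerivAt_hermiteProd n x).differentiableAt.hasDerivAt) (by positivity)
    (by positivity) (by simp) (h n)
    (integral_deriv_hermiteProd_add_mul_sq_le hK.le ⟨by linarith, by linarith⟩ h n)

section Tensorization

variable {d : Type*} [Fintype d] {u : d → ℝ → ℝ} {B X : d → ℝ}

lemma sum_prod_hermiteCoef_sq_le [DecidableEq d] (hu : ∀ i, SobolevBound (B i) (X i) (u i))
    (t : d → Finset ℕ) :
    ∑ k ∈ Fintype.piFinset t, ∏ i, hermiteCoef (u i) (k i) ^ 2 ≤ ∏ i, B i := by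
  rw [← Finset.prod_univ_sum t fun i l => hermiteCoef (u i) l ^ 2]
  exact Finset.prod_le_prod (fun i _ => by positivity) fun i _ => (hu i (t i)).1

lemma sum_mul_prod_hermiteCoef_sq_le [DecidableEq d]
    (hu : ∀ i, SobolevBound (B i) (X i) (u i)) (t : d → Finset ℕ) (i : d) :
    ∑ k ∈ Fintype.piFinset t, (2 * (k i : ℝ) + 1) * ∏ j, hermiteCoef (u j) (k j) ^ 2 ≤
      X i * ∏ j, B j := by
  have hprod (a : ℝ) (b : d → ℝ) : a * ∏ j, b j = ∏ j, (if j = i then a else 1) * b j := by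
    rw [Finset.prod_mul_distrib, Finset.prod_ite_eq' Finset.univ i, if_pos (Finset.mem_univ i)]
  have hweight (k : d → ℕ) : (2 * (k i : ℝ) + 1) * ∏ j, hermiteCoef (u j) (k j) ^ 2 =
      ∏ j, (if j = i then 2 * (k j : ℝ) + 1 else 1) * hermiteCoef (u j) (k j) ^ 2 := by
    rw [hprod]
    congr! 3 with j _ h
    rw [h]
  simp_rw [hweight]
  rw [hprod, ← Finset.prod_univ_sum t
    fun j (l : ℕ) => (if j = i then 2 * (l : ℝ) + 1 else 1) * hermiteCoef (u j) l ^ 2]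
  refine Finset.prod_le_prod (fun j _ => Finset.sum_nonneg fun l _ => by split_ifs <;> positivity)
    fun j _ => ?_
  split_ifs with h
  · simpa only [h] using (hu j (t j)).2
  · simpa only [one_mul] using (hu j (t j)).1

end Tensorization

/-! ### Sobolev norms on `ℝ³` -/

lemma coef3_prod (u : Fin 3 → ℝ → ℝ) (k : Fin 3 → ℕ) :
    coef3 (fun x => ((∏ i, u i (x i) : ℝ) : ℂ)) k = ((∏ i, hermiteCoef (u i) (k i) : ℝ) : ℂ) := by
  simp only [coef3, hermite3, ← Complex.ofReal_mul, ← Finset.prod_mul_distrib]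
  rw [integral_complex_ofReal, ←
    (EuclideanSpace.volume_preserving_symm_measurableEquiv_toLp (Fin 3)).symm.integral_comp']
  exact congrArg _ (integral_fintype_prod_volume_eq_prod fun i y => hermiteFun (k i) y * u i y)

lemma lam3_sq (n : Fin 3 → ℕ) : lam3 n ^ 2 = ∑ i, (2 * (n i : ℝ) + 1) := by
  rw [lam3, Real.sq_sqrt (by positivity), Finset.sum_add_distrib, Finset.mul_sum]
  simp

lemma one_le_lam3 (n : Fin 3 → ℕ) : 1 ≤ lam3 n := by
  have hsum : (0 : ℝ) ≤ ∑ i, (n i : ℝ) := by positivity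
  exact Real.one_le_sqrt.2 (by linarith)

lemma add_one_le_lam3_sq (n : Fin 3 → ℕ) (i : Fin 3) : (n i : ℝ) + 1 ≤ lam3 n ^ 2 :=
  calc (n i : ℝ) + 1 ≤ 2 * (n i : ℝ) + 1 := by linarith [(n i).cast_nonneg (α := ℝ)]
    _ ≤ ∑ j, (2 * (n j : ℝ) + 1) := Finset.single_le_sum (f := fun j => 2 * (n j : ℝ) + 1)
        (fun _ _ => by positivity) (Finset.mem_univ i)
    _ = lam3 n ^ 2 := (lam3_sq n).symm

lemma exists_lam3_sq_le (n : Fin 3 → ℕ) : ∃ i, lam3 n ^ 2 ≤ 6 * ((n i : ℝ) + 1) := by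
  obtain ⟨i, -, hi⟩ := Finset.exists_max_image Finset.univ n Finset.univ_nonempty
  refine ⟨i, ?_⟩
  calc lam3 n ^ 2 = ∑ j, (2 * (n j : ℝ) + 1) := lam3_sq n
    _ ≤ ∑ _j : Fin 3, (2 * (n i : ℝ) + 1) := by
        gcongr with j
        exact hi j (Finset.mem_univ j)
    _ ≤ 6 * ((n i : ℝ) + 1) := by
        rw [Finset.sum_const, Finset.card_univ, Fintype.card_fin, nsmul_eq_mul]
        push_cast
        linarith

lemma rpow_two_mul_le {l L s : ℝ} (hl : 0 < l) (hL : 0 < L) (hs : s ∈ Set.Icc (0 : ℝ) 1) :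
    l ^ (2 * s) ≤ L ^ (2 * s) * (1 + l ^ 2 / L ^ 2) := by
  have hratio : (l / L) ^ (2 * s) ≤ 1 + (l / L) ^ 2 := by
    have hpos : 0 < l / L := by positivity
    rcases le_total (l / L) 1 with h | h
    · exact (Real.rpow_le_one hpos.le h (by linarith [hs.1])).trans (by simp [sq_nonneg])
    · have hpow : (l / L) ^ (2 * s) ≤ (l / L) ^ (2 : ℝ) :=
        Real.rpow_le_rpow_of_exponent_le h (by linarith [hs.2])
      rw [Real.rpow_two] at hpow
      linarith
  rwa [Real.div_rpow hl.le hL.le, div_le_iff₀' (by positivity), div_pow] at hratio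

section SobolevNorm

variable {s L : ℝ} {u : Fin 3 → ℝ → ℝ} {B X : Fin 3 → ℝ}

lemma sum_lam3_rpow_mul_prod_hermiteCoef_sq_le (hs : s ∈ Set.Icc (0 : ℝ) 1) (hL : 0 < L)
    (hX : ∀ i, X i ≤ L ^ 2) (hu : ∀ i, SobolevBound (B i) (X i) (u i)) (t : Fin 3 → Finset ℕ) :
    ∑ k ∈ Fintype.piFinset t, lam3 k ^ (2 * s) * ∏ i, hermiteCoef (u i) (k i) ^ 2 ≤
      4 * (∏ i, B i) * L ^ (2 * s) := by
  have hB : 0 ≤ ∏ i, B i := Finset.prod_nonneg fun i _ => by simpa using (hu i ∅).1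
  calc ∑ k ∈ Fintype.piFinset t, lam3 k ^ (2 * s) * ∏ i, hermiteCoef (u i) (k i) ^ 2
      ≤ ∑ k ∈ Fintype.piFinset t,
          L ^ (2 * s) * (1 + lam3 k ^ 2 / L ^ 2) * ∏ i, hermiteCoef (u i) (k i) ^ 2 := by
        gcongr with k
        exact rpow_two_mul_le (zero_lt_one.trans_le (one_le_lam3 k)) hL hs
    _ = L ^ (2 * s) * (∑ k ∈ Fintype.piFinset t, ∏ i, hermiteCoef (u i) (k i) ^ 2 +
          (∑ i, ∑ k ∈ Fintype.piFinset t,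
            (2 * (k i : ℝ) + 1) * ∏ j, hermiteCoef (u j) (k j) ^ 2) / L ^ 2) := by
        rw [Finset.sum_comm, Finset.sum_div, ← Finset.sum_add_distrib, Finset.mul_sum]
        refine Finset.sum_congr rfl fun k _ => ?_
        rw [← Finset.sum_mul, ← lam3_sq]
        ring
    _ ≤ L ^ (2 * s) * ((∏ i, B i) + (∑ _i : Fin 3, L ^ 2 * ∏ j, B j) / L ^ 2) := by
        gcongr with i
        · exact sum_prod_hermiteCoef_sq_le hu t
        · exact (sum_mul_prod_hermiteCoef_sq_le hu t i).trans (by gcongr; exact hX i)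
    _ = 4 * (∏ i, B i) * L ^ (2 * s) := by
        rw [Finset.sum_const, Finset.card_univ, Fintype.card_fin]
        field_simp
        ring

lemma hs3Norm_prod_le (hs : s ∈ Set.Icc (0 : ℝ) 1) (hL : 0 < L) (hX : ∀ i, X i ≤ L ^ 2)
    (hu : ∀ i, SobolevBound (B i) (X i) (u i)) :
    hs3Norm s (fun x => ((∏ i, u i (x i) : ℝ) : ℂ)) ≤
      ENNReal.ofReal (√(4 * ∏ i, B i) * L ^ s) := by
  have hnonneg (k : Fin 3 → ℕ) : 0 ≤ lam3 k ^ (2 * s) * ∏ i, hermiteCoef (u i) (k i) ^ 2 :=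
    mul_nonneg (Real.rpow_nonneg (zero_le_one.trans (one_le_lam3 k)) _) (by positivity)
  have htsum : ∑' k : Fin 3 → ℕ,
      ENNReal.ofReal (lam3 k ^ (2 * s) * ∏ i, hermiteCoef (u i) (k i) ^ 2) ≤
        ENNReal.ofReal (4 * (∏ i, B i) * L ^ (2 * s)) := by
    rw [ENNReal.tsum_eq_iSup_sum]
    refine iSup_le fun F => ?_
    rw [← ENNReal.ofReal_sum_of_nonneg fun k _ => hnonneg k]
    have hF : F ⊆ Fintype.piFinset fun i => F.image fun k => k i := fun k hk =>
      Fintype.mem_piFinset.2 fun i => Finset.mem_image_of_mem _ hk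
    exact ENNReal.ofReal_le_ofReal ((Finset.sum_le_sum_of_subset_of_nonneg hF fun k _ _ =>
      hnonneg k).trans (sum_lam3_rpow_mul_prod_hermiteCoef_sq_le hs hL hX hu _))
  have hB : 0 ≤ ∏ i, B i := Finset.prod_nonneg fun i _ => by simpa using (hu i ∅).1
  simp only [hs3Norm, coef3_prod, Complex.norm_real, Real.norm_eq_abs, sq_abs, ← Finset.prod_pow]
  refine (ENNReal.rpow_le_rpow htsum (by norm_num)).trans_eq ?_
  rw [ENNReal.ofReal_rpow_of_nonneg (by positivity) (by norm_num), ← Real.sqrt_eq_rpow,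
    Real.sqrt_mul (by positivity), mul_comm 2 s, Real.rpow_mul hL.le, Real.rpow_two,
    Real.sqrt_sq (by positivity)]

end SobolevNorm

lemma prod_mul_rpow_le {d : Type*} [Fintype d] {K θ : ℝ} (hK : 0 ≤ K) (hθ : θ ≤ 0) {X : d → ℝ}
    (hX : ∀ i, 1 ≤ X i) (i₀ : d) : ∏ i, K * X i ^ θ ≤ K ^ Fintype.card d * X i₀ ^ θ := by
  classical
  have hnonneg (i : d) : 0 ≤ X i ^ θ := Real.rpow_nonneg (zero_le_one.trans (hX i)) θ
  rw [Finset.prod_mul_distrib, Finset.prod_const, Finset.card_univ,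
    ← Finset.mul_prod_erase _ _ (Finset.mem_univ i₀)]
  gcongr
  exact mul_le_of_le_one_right (hnonneg i₀) (Finset.prod_le_one (fun i _ => hnonneg i)
    fun i _ => Real.rpow_le_one_of_one_le_of_nonpos (hX i) hθ)

section Products

variable {ι : Type*} [Fintype ι]

lemma prod_hermite3_eq (n : ι → Fin 3 → ℕ) (x : Rd 3) :
    ∏ j, (hermite3 (n j) x : ℂ) = ((∏ i, hermiteProd (fun j => n j i) (x i) : ℝ) : ℂ) := by
  simp only [hermite3, hermiteProd]
  rw [Finset.prod_comm, Complex.ofReal_prod]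

variable {n : ι → Fin 3 → ℕ} {L : ℝ}

lemma sup_add_one_le_sq [Nonempty ι] (hL : ∀ j, lam3 (n j) ≤ L) (i : Fin 3) :
    ((Finset.univ.sup fun j => n j i : ℕ) : ℝ) + 1 ≤ L ^ 2 := by
  obtain ⟨j, -, hj⟩ := Finset.exists_mem_eq_sup _ Finset.univ_nonempty fun j => n j i
  rw [hj]
  exact (add_one_le_lam3_sq (n j) i).trans
    (pow_le_pow_left₀ (zero_le_one.trans (one_le_lam3 (n j))) (hL j) 2)

lemma exists_lam3_sq_le_sup_add_one (j : ι) :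
    ∃ i, lam3 (n j) ^ 2 ≤ 6 * (((Finset.univ.sup fun j => n j i : ℕ) : ℝ) + 1) := by
  obtain ⟨i, hi⟩ := exists_lam3_sq_le (n j)
  refine ⟨i, hi.trans ?_⟩
  gcongr
  exact Finset.le_sup (f := fun j => n j i) (Finset.mem_univ j)

lemma exists_hs3Norm_prod_hermite3_le [Nontrivial ι] {ε : ℝ} (hε : 0 < ε) (hε' : ε ≤ 1 / 2) {s : ℝ}
    (hs : s ∈ Set.Icc (0 : ℝ) 1) :
    ∃ C > 0, ∀ (n : ι → Fin 3 → ℕ) (L : ℝ), IsGreatest (Set.range fun j => lam3 (n j)) L →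
      hs3Norm s (fun x => ∏ j, (hermite3 (n j) x : ℂ)) ≤
        ENNReal.ofReal (C * L ^ (s - 1/2 + ε)) := by
  obtain ⟨K, hK, hu⟩ := exists_sobolevBound_hermiteProd (ι := ι) hε hε'
  refine ⟨√(24 * K ^ 3), by positivity, ?_⟩
  rintro n L ⟨⟨j, rfl⟩, hmax⟩
  set L := lam3 (n j)
  have hL : 0 < L := zero_lt_one.trans_le (one_le_lam3 (n j))
  have hθ : ε - 1/2 ∈ Set.Icc (-1) 0 := ⟨by linarith, by linarith⟩
  obtain ⟨i, hi⟩ := exists_lam3_sq_le_sup_add_one (n := n) j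
  set X : Fin 3 → ℝ := fun i => ((Finset.univ.sup fun j => n j i : ℕ) : ℝ) + 1 with hX
  have hX1 (i : Fin 3) : 1 ≤ X i := by simp [hX]
  have hprod : 4 * ∏ i, K * X i ^ (ε - 1/2) ≤ 24 * K ^ 3 * (L ^ (ε - 1/2)) ^ 2 :=
    calc 4 * ∏ i, K * X i ^ (ε - 1/2)
        ≤ 4 * (K ^ 3 * X i ^ (ε - 1/2)) := by
          gcongr
          exact prod_mul_rpow_le hK.le hθ.2 hX1 i
      _ ≤ 4 * (K ^ 3 * (6 * (L ^ 2) ^ (ε - 1/2))) := by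
          gcongr
          exact rpow_le_mul_rpow_of_le_mul (by positivity) (by positivity) (by norm_num) hi hθ
      _ = 24 * K ^ 3 * (L ^ (ε - 1/2)) ^ 2 := by
          rw [Real.rpow_pow_comm hL.le]
          ring
  simp_rw [prod_hermite3_eq]
  refine (hs3Norm_prod_le hs hL (sup_add_one_le_sq fun j => hmax ⟨j, rfl⟩)
    fun i => hu fun j => n j i).trans (ENNReal.ofReal_le_ofReal ?_)
  calc √(4 * ∏ i, K * X i ^ (ε - 1/2)) * L ^ s
      ≤ √(24 * K ^ 3 * (L ^ (ε - 1/2)) ^ 2) * L ^ s := by gcongr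
    _ = √(24 * K ^ 3) * L ^ (s - 1/2 + ε) := by
        rw [Real.sqrt_mul (by positivity), Real.sqrt_sq (by positivity), mul_assoc,
          ← Real.rpow_add hL]
        ring_nf

end Products

lemma isGreatest_range_fin_two {α : Type*} [LinearOrder α] (f : Fin 2 → α) :
    IsGreatest (Set.range f) (max (f 0) (f 1)) := by
  convert isGreatest_pair (a := f 0) (b := f 1)
  ext
  simp [Fin.exists_fin_two, eq_comm]

lemma isGreatest_range_fin_three {α : Type*} [LinearOrder α] (f : Fin 3 → α) :
    IsGreatest (Set.range f) (max (f 0) (max (f 1) (f 2))) := by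
  convert (isGreatest_pair (a := f 1) (b := f 2)).insert (f 0)
  ext
  simp [Fin.exists_fin_succ, eq_comm]

theorem statement_10_general {ι : Type*} [Fintype ι] [Nontrivial ι] (δ : ℝ) (hδ : 0 < δ) (s : ℝ)
    (hs : s ∈ Set.Icc (0 : ℝ) 1) :
    ∃ C : ℝ, 0 < C ∧ ∀ (n : ι → Fin 3 → ℕ) (L : ℝ), IsGreatest (Set.range fun j => lam3 (n j)) L →
      hs3Norm s (fun x => ∏ j, (hermite3 (n j) x : ℂ)) ≤
        ENNReal.ofReal (C * L ^ (s - 1/2 + δ)) := by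
  obtain ⟨C, hC, h⟩ := exists_hs3Norm_prod_hermite3_le (ι := ι)
    (lt_min hδ (by norm_num : (0 : ℝ) < 1 / 2)) (min_le_right _ _) hs
  refine ⟨C, hC, fun n L hL => (h n L hL).trans (ENNReal.ofReal_le_ofReal ?_)⟩
  obtain ⟨j, rfl⟩ := hL.1
  gcongr
  · exact one_le_lam3 (n j)
  · exact min_le_left _ _

/-- Bilinear and trilinear bounds for products of Hermite functions: for
`δ > 0`, `s ∈ [0,1]` there is `C > 0` with `‖h_n h_m‖_{ℋ^s(ℝ³)} ≤ C max(λ_n,λ_m)^{s-1/2+δ}` and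
`‖h_n h_m h_k‖_{ℋ^s(ℝ³)} ≤ C max(λ_n,λ_m,λ_k)^{s-1/2+δ}`. -/
theorem statement_10 (δ : ℝ) (hδ : 0 < δ) (s : ℝ) (hs : s ∈ Set.Icc (0 : ℝ) 1) :
    ∃ C : ℝ, 0 < C ∧ ∀ n m k : Fin 3 → ℕ,
      hs3Norm s (fun x => (hermite3 n x : ℂ) * (hermite3 m x : ℂ)) ≤
        ENNReal.ofReal (C * max (lam3 n) (lam3 m) ^ (s - 1/2 + δ)) ∧
      hs3Norm s (fun x => (hermite3 n x : ℂ) * (hermite3 m x : ℂ) * (hermite3 k x : ℂ)) ≤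
        ENNReal.ofReal (C * max (lam3 n) (max (lam3 m) (lam3 k)) ^ (s - 1/2 + δ)) := by
  obtain ⟨C₂, hC₂, h₂⟩ := statement_10_general (ι := Fin 2) δ hδ s hs
  obtain ⟨C₃, -, h₃⟩ := statement_10_general (ι := Fin 3) δ hδ s hs
  have hnonneg (n : Fin 3 → ℕ) (L : ℝ) : 0 ≤ max (lam3 n) L ^ (s - 1/2 + δ) :=
    Real.rpow_nonneg (le_max_of_le_left (zero_le_one.trans (one_le_lam3 n))) _
  refine ⟨max C₂ C₃, lt_max_of_lt_left hC₂, fun n m k => ⟨?_, ?_⟩⟩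
  · have h := h₂ ![n, m] _ (isGreatest_range_fin_two _)
    simp only [Fin.prod_univ_two] at h
    exact h.trans (ENNReal.ofReal_le_ofReal
      (mul_le_mul_of_nonneg_right (le_max_left _ _) (hnonneg n _)))
  · have h := h₃ ![n, m, k] _ (isGreatest_range_fin_three _)
    simp only [Fin.prod_univ_three] at h
    exact h.trans (ENNReal.ofReal_le_ofReal
      (mul_le_mul_of_nonneg_right (le_max_right _ _) (hnonneg n _)))

end
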